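/- The criticality measure ω is continuous on X: for every sequence x⁽ᵗ⁾ ∈ X with x⁽ᵗ⁾ → x ∈ X one has ω(x⁽ᵗ⁾) → ω(x). (Theorem 2.2(2), proved in Appendix A.1.) -/

import Mathlib

noncomputable section

/-- The ℓ^∞ (maximum) norm on Euclidean space. -/
def supNorm {n : ℕ} (v : EuclideanSpace ℝ (Fin n)) : ℝ :=
  ‖(WithLp.equiv 2 (Fin n → ℝ)) v‖

/-- The multiobjective criticality measure
`ω(x) = − inf { max_ℓ ⟨∇f_ℓ(x), d⟩ : x + d ∈ X, ‖d‖_∞ ≤ 1 }`. -/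
def omega {n k : ℕ} (X : Set (EuclideanSpace ℝ (Fin n)))
    (f : Fin k → EuclideanSpace ℝ (Fin n) → ℝ) (x : EuclideanSpace ℝ (Fin n)) : ℝ :=
  - sInf ((fun d => ⨆ ℓ, fderiv ℝ (f ℓ) x d) ''
      {d : EuclideanSpace ℝ (Fin n) | x + d ∈ X ∧ supNorm d ≤ 1})

open Filter Topology Pointwise

section supNorm

variable {n : ℕ}

theorem continuous_supNorm : Continuous (supNorm (n := n)) :=
  (PiLp.continuous_ofLp 2 _).norm

theorem supNorm_nonneg (v : EuclideanSpace ℝ (Fin n)) : 0 ≤ supNorm v :=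
  norm_nonneg _

theorem supNorm_add_le (v w : EuclideanSpace ℝ (Fin n)) :
    supNorm (v + w) ≤ supNorm v + supNorm w :=
  norm_add_le (WithLp.ofLp v) (WithLp.ofLp w)

theorem supNorm_smul (c : ℝ) (v : EuclideanSpace ℝ (Fin n)) :
    supNorm (c • v) = |c| * supNorm v :=
  norm_smul c (WithLp.ofLp v)

@[simp]
theorem supNorm_zero : supNorm (0 : EuclideanSpace ℝ (Fin n)) = 0 :=
  norm_zero (E := Fin n → ℝ)

end supNorm

section feasibleDirections

variable {n : ℕ} {X : Set (EuclideanSpace ℝ (Fin n))}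

/-- The directions over which the infimum defining `omega X f x` is taken. -/
def feasibleDirections (X : Set (EuclideanSpace ℝ (Fin n))) (x : EuclideanSpace ℝ (Fin n)) :
    Set (EuclideanSpace ℝ (Fin n)) :=
  {d | x + d ∈ X ∧ supNorm d ≤ 1}

theorem zero_mem_feasibleDirections {x : EuclideanSpace ℝ (Fin n)} (hx : x ∈ X) :
    0 ∈ feasibleDirections X x := by
  simpa [feasibleDirections] using hx

theorem feasibleDirections_subset_sub {x : EuclideanSpace ℝ (Fin n)} (hx : x ∈ X) :
    feasibleDirections X x ⊆ X - X :=
  fun d hd => ⟨x + d, hd.1, x, hx, add_sub_cancel_left x d⟩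

theorem isClosed_graph_feasibleDirections (hX : IsClosed X) :
    IsClosed {p : EuclideanSpace ℝ (Fin n) × EuclideanSpace ℝ (Fin n) |
      p.2 ∈ feasibleDirections X p.1} :=
  (hX.preimage (continuous_fst.add continuous_snd)).inter
    (isClosed_le (continuous_supNorm.comp continuous_snd) continuous_const)

theorem isCompact_sub_self (hX : IsCompact X) : IsCompact (X - X) := by
  simpa only [Set.image_prod, Set.image2_sub] using (hX.prod hX).image continuous_sub

theorem isCompact_feasibleDirections (hX : IsCompact X) {x : EuclideanSpace ℝ (Fin n)}
    (hx : x ∈ X) : IsCompact (feasibleDirections X x) :=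
  (isCompact_sub_self hX).of_isClosed_subset
    ((isClosed_graph_feasibleDirections hX.isClosed).preimage (Continuous.prodMk_right x))
    (feasibleDirections_subset_sub hx)

/-- Lower hemicontinuity of the feasible directions: every feasible direction at `x` is the limit
of feasible directions at the points of `X` near `x`. -/
theorem exists_tendsto_feasibleDirections (hX : Convex ℝ X) {x d : EuclideanSpace ℝ (Fin n)}
    (hd : d ∈ feasibleDirections X x) :
    ∃ g : EuclideanSpace ℝ (Fin n) → EuclideanSpace ℝ (Fin n),
      Tendsto g (𝓝 x) (𝓝 d) ∧ ∀ a ∈ X, g a ∈ feasibleDirections X a := by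
  have hpos (a : EuclideanSpace ℝ (Fin n)) : 0 < 1 + supNorm (x - a) := by
    linarith [supNorm_nonneg (x - a)]
  refine ⟨fun a => (1 + supNorm (x - a))⁻¹ • (x + d - a), ?_, fun a ha => ⟨?_, ?_⟩⟩
  · have hcont : Continuous fun a => (1 + supNorm (x - a))⁻¹ • (x + d - a) :=
      ((continuous_const.add (continuous_supNorm.comp (continuous_const.sub continuous_id))).inv₀
        fun a => (hpos a).ne').smul (continuous_const.sub continuous_id)
    simpa using hcont.tendsto x
  · exact hX.add_smul_sub_mem ha hd.1
      ⟨(inv_pos.2 (hpos a)).le, inv_le_one_of_one_le₀ (by linarith [supNorm_nonneg (x - a)])⟩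
  · have hle : supNorm (x + d - a) ≤ 1 + supNorm (x - a) := by
      have h := supNorm_add_le d (x - a)
      rw [show d + (x - a) = x + d - a by abel] at h
      linarith [hd.2]
    rw [supNorm_smul, abs_of_pos (inv_pos.2 (hpos a)), inv_mul_le_iff₀ (hpos a)]
    linarith

end feasibleDirections

section parametricInfimum

variable {n : ℕ} {X : Set (EuclideanSpace ℝ (Fin n))}
  {φ : EuclideanSpace ℝ (Fin n) → EuclideanSpace ℝ (Fin n) → ℝ}

/-- The infimum of a jointly continuous function over the feasible directions depends
continuously on the base point. -/
theorem continuousOn_sInf_image_feasibleDirections (hXconv : Convex ℝ X) (hXcomp : IsCompact X)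
    (hφ : ∀ x ∈ X, ∀ d, ContinuousAt φ.uncurry (x, d)) :
    ContinuousOn (fun x => sInf (φ x '' feasibleDirections X x)) X := by
  intro x hx
  have hbdd {a : EuclideanSpace ℝ (Fin n)} (ha : a ∈ X) :
      BddBelow (φ a '' feasibleDirections X a) :=
    ((isCompact_feasibleDirections hXcomp ha).image (continuous_iff_continuousAt.2 fun d =>
      (hφ a ha d).comp (Continuous.prodMk_right a).continuousAt)).bddBelow
  have hne {a : EuclideanSpace ℝ (Fin n)} (ha : a ∈ X) :
      (φ a '' feasibleDirections X a).Nonempty :=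
    ⟨_, 0, zero_mem_feasibleDirections ha, rfl⟩
  refine tendsto_order.2 ⟨fun m hm => ?_, fun m hm => ?_⟩
  · obtain ⟨m', hmm', hm'⟩ := exists_between hm
    have hloc : ∀ d ∈ X - X, ∀ᶠ p in 𝓝 x ×ˢ 𝓝 d,
        p.2 ∈ feasibleDirections X p.1 → m' < φ p.1 p.2 := by
      intro d _
      rw [← nhds_prod_eq]
      by_cases hd : d ∈ feasibleDirections X x
      · have hlt : m' < φ.uncurry (x, d) := hm'.trans_le (csInf_le (hbdd hx) ⟨d, hd, rfl⟩)
        filter_upwards [(hφ x hx d).eventually (lt_mem_nhds hlt)] with p hp _ using hp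
      · filter_upwards [(isClosed_graph_feasibleDirections hXcomp.isClosed).isOpen_compl.mem_nhds
          (x := (x, d)) hd] with p hp hp' using absurd hp' hp
    have hunif : ∀ᶠ a in 𝓝 x, ∀ d ∈ X - X, d ∈ feasibleDirections X a → m' < φ a d :=
      (isCompact_sub_self hXcomp).eventually_forall_of_forall_eventually
        fun d hd => by simpa only [nhds_prod_eq] using hloc d hd
    filter_upwards [nhdsWithin_le_nhds hunif, self_mem_nhdsWithin] with a hunif_a ha
    refine hmm'.trans_le (le_csInf (hne ha) ?_)
    rintro _ ⟨d, hd, rfl⟩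
    exact (hunif_a d (feasibleDirections_subset_sub ha hd) hd).le
  · obtain ⟨_, ⟨d, hd, rfl⟩, hdm⟩ := exists_lt_of_csInf_lt (hne hx) hm
    obtain ⟨g, hg, hgX⟩ := exists_tendsto_feasibleDirections hXconv hd
    have hlim : Tendsto (fun a => φ a (g a)) (𝓝 x) (𝓝 (φ x d)) :=
      (hφ x hx d).tendsto.comp (tendsto_id.prodMk_nhds hg)
    filter_upwards [nhdsWithin_le_nhds (hlim.eventually (gt_mem_nhds hdm)), self_mem_nhdsWithin]
      with a hlt ha
    exact (csInf_le (hbdd ha) ⟨g a, hgX a ha, rfl⟩).trans_lt hlt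

end parametricInfimum

theorem continuousAt_iSup_fderiv {E ι : Type*} [NormedAddCommGroup E] [NormedSpace ℝ E]
    [Fintype ι] [Nonempty ι] {f : ι → E → ℝ} {U : Set E} (hU : IsOpen U)
    (hf : ∀ i, ContDiffOn ℝ 1 (f i) U) {x : E} (hx : x ∈ U) (d : E) :
    ContinuousAt (fun p : E × E => ⨆ i, fderiv ℝ (f i) p.1 p.2) (x, d) := by
  simp only [← Finset.sup'_univ_eq_ciSup]
  refine ContinuousAt.finset_sup'_apply _ fun i _ => ?_
  have hfd : ContinuousAt (fderiv ℝ (f i)) x :=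
    ((hf i).continuousOn_fderiv_of_isOpen hU le_rfl).continuousAt (hU.mem_nhds hx)
  exact (hfd.comp (x := (x, d)) continuousAt_fst).clm_apply continuousAt_snd

/-- Theorem 2.2(2): the criticality measure `ω` is continuous on `X`:
for every sequence `x⁽ᵗ⁾ ∈ X` converging to `x ∈ X`, `ω(x⁽ᵗ⁾) → ω(x)`. -/
theorem omega_continuous
    (n k : ℕ) (hk : 1 ≤ k)
    (X : Set (EuclideanSpace ℝ (Fin n)))
    (hXne : X.Nonempty) (hXconv : Convex ℝ X) (hXcomp : IsCompact X)
    (f : Fin k → EuclideanSpace ℝ (Fin n) → ℝ)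
    (U : Set (EuclideanSpace ℝ (Fin n))) (hUopen : IsOpen U) (hXU : X ⊆ U)
    (hf : ∀ ℓ, ContDiffOn ℝ 1 (f ℓ) U)
    (xseq : ℕ → EuclideanSpace ℝ (Fin n)) (hxseq : ∀ t, xseq t ∈ X)
    (x : EuclideanSpace ℝ (Fin n)) (hx : x ∈ X)
    (hlim : Filter.Tendsto xseq Filter.atTop (nhds x)) :
    Filter.Tendsto (fun t => omega X f (xseq t)) Filter.atTop (nhds (omega X f x)) := by
  have : Nonempty (Fin k) := ⟨⟨0, hk⟩⟩
  have hcont : ContinuousOn (omega X f) X :=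
    (continuousOn_sInf_image_feasibleDirections
      (φ := fun a d => ⨆ ℓ, fderiv ℝ (f ℓ) a d) hXconv hXcomp fun a ha d =>
      continuousAt_iSup_fderiv hUopen hf (hXU ha) d).neg
  exact (hcont x hx).tendsto.comp
    (tendsto_nhdsWithin_iff.2 ⟨hlim, Eventually.of_forall hxseq⟩)
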